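/- Let X₁, X₂ be i.i.d. Weibull(α, β) and let H₁(x₁,x₂) = (log x₁ + log x₂)/(2 log 2) − log(min{x₁,x₂})/log 2. Then Var(H₁(X₁,X₂)) ≤ Var(log X₁)/(2 log² 2) = ψ'(1)/(2 α² log² 2) < ∞. -/

import Mathlib

/-!
Almost surely both variables are positive, and then `H₁ = |Y| / (2 log 2)` with
`Y = log X₁ - log X₂`. Since `Y` has mean zero, `Var |Y| ≤ E[Y²] = Var Y = 2 Var (log X₁)`,
which is the inequality.

For the value of `Var (log X₁)`, the variable `(X / β) ^ α` is standard exponential, so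
`E[X ^ t] = β ^ t Γ(1 + t / α)` (`IsWeibull.mgf_log`). By independence the moment generating
function of `Y` is `Γ(1 + t / α) Γ(1 - t / α)`, which by Euler's reflection formula is
`(π t / α) / sin (π t / α)` for `0 < |t| < α` (`IsWeibull.mgf_log_sub_log`). Its second derivative
at `0` is `π² / (3 α²)` (`iteratedDeriv_two_of_mul_sin`), and this equals `E[Y²]`. Thus the
reflection formula takes the place of the value of `ψ'(1)`.
-/

open MeasureTheory ProbabilityTheory Real

/-- CDF of the Weibull distribution with shape `α` and scale `β`. -/
noncomputable def weibullCDF (α β x : ℝ) : ℝ :=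
  if x ≤ 0 then 0 else 1 - Real.exp (-(x / β) ^ α)

/-- `X` is Weibull(α, β)-distributed under `μ`. -/
def IsWeibull {Ω : Type*} [MeasurableSpace Ω] (μ : Measure Ω) (X : Ω → ℝ)
    (α β : ℝ) : Prop :=
  ∀ x : ℝ, μ {ω | X ω ≤ x} = ENNReal.ofReal (weibullCDF α β x)

open scoped Topology

/-- If `f(t) · sin(ct) = ct` near `0`, then `f''(0) = c² / 3`. The third derivative of
`f(t) · sin(ct)` at `0` is `3c f''(0) - c³ f(0)`, and `f(0) = 1` by the first derivative. -/
lemma iteratedDeriv_two_of_mul_sin {f : ℝ → ℝ} {c : ℝ} (hc : c ≠ 0) (hf : AnalyticAt ℝ f 0)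
    (h : ∀ᶠ t in 𝓝 (0 : ℝ), f t * sin (c * t) = c * t) :
    iteratedDeriv 2 f 0 = c ^ 2 / 3 := by
  have step : ∀ F G F' G' : ℝ → ℝ, (∀ᶠ t in 𝓝 (0 : ℝ), F t = G t) →
      (∀ᶠ t in 𝓝 (0 : ℝ), HasDerivAt F (F' t) t) → (∀ t, HasDerivAt G (G' t) t) →
      ∀ᶠ t in 𝓝 (0 : ℝ), F' t = G' t := by
    intro F G F' G' hFG hF hG
    filter_upwards [hFG.eventually_nhds, hF] with t ht hFt
    exact (hFt.congr_of_eventuallyEq ((Filter.EventuallyEq.symm ht))).unique (hG t)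
  have hs : ∀ t, HasDerivAt (fun t => sin (c * t)) (c * cos (c * t)) t := fun t => by
    simpa [mul_comm] using ((hasDerivAt_id t).const_mul c).sin
  have hco : ∀ t, HasDerivAt (fun t => cos (c * t)) (-(c * sin (c * t))) t := fun t => by
    simpa [mul_comm] using ((hasDerivAt_id t).const_mul c).cos
  have d : ∀ g : ℝ → ℝ, AnalyticAt ℝ g 0 → ∀ᶠ t in 𝓝 (0 : ℝ), HasDerivAt g (deriv g t) t := by
    intro g hg
    filter_upwards [hg.eventually_analyticAt] with t ht
    exact ht.differentiableAt.hasDerivAt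
  have e1 := step _ _ (fun t => deriv f t * sin (c * t) + f t * (c * cos (c * t))) (fun _ => c) h
    (by filter_upwards [d f hf] with t ht using ht.mul (hs t))
    (fun t => by simpa using (hasDerivAt_id t).const_mul c)
  have e2 := step _ _ (fun t => deriv (deriv f) t * sin (c * t) + deriv f t * (c * cos (c * t))
      + (deriv f t * (c * cos (c * t)) + f t * (c * -(c * sin (c * t))))) (fun _ => 0) e1
    (by filter_upwards [d f hf, d _ hf.deriv] with t ht ht' using
          (ht'.mul (hs t)).add (ht.mul ((hco t).const_mul c)))
    (fun t => hasDerivAt_const t c)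
  have e3 := step _ _ (fun t => deriv (deriv (deriv f)) t * sin (c * t)
      + deriv (deriv f) t * (c * cos (c * t))
      + (deriv (deriv f) t * (c * cos (c * t)) + deriv f t * (c * -(c * sin (c * t))))
      + (deriv (deriv f) t * (c * cos (c * t)) + deriv f t * (c * -(c * sin (c * t)))
      + (deriv f t * (c * -(c * sin (c * t))) + f t * (c * -(c * (c * cos (c * t)))))))
      (fun _ => 0) e2
    (by filter_upwards [d f hf, d _ hf.deriv, d _ hf.deriv.deriv] with t ht ht' ht'' using
          ((ht''.mul (hs t)).add (ht'.mul ((hco t).const_mul c))).add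
            ((ht'.mul ((hco t).const_mul c)).add
              (ht.mul ((((hs t).const_mul c).neg).const_mul c))))
    (fun t => hasDerivAt_const t 0)
  have a1 := e1.self_of_nhds
  have a3 := e3.self_of_nhds
  simp only [mul_zero, sin_zero, cos_zero, zero_add, mul_one, neg_zero, add_zero] at a1 a3
  have f0 : f 0 = 1 := by
    apply mul_right_cancel₀ hc; linarith
  rw [iteratedDeriv_succ, iteratedDeriv_one]
  rw [f0] at a3
  apply mul_left_cancel₀ hc
  linarith

section Weibull

variable {Ω : Type*} [MeasurableSpace Ω] {μ : Measure Ω} {X X₁ X₂ : Ω → ℝ} {α β : ℝ}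

lemma IsWeibull.ae_pos (hX : IsWeibull μ X α β) : ∀ᵐ ω ∂μ, 0 < X ω := by
  rw [ae_iff]
  simpa [weibullCDF] using hX 0

variable [IsProbabilityMeasure μ]

/-- The standardisation `(X / β) ^ α` of a Weibull variable is exponential with rate `1`. -/
lemma IsWeibull.map_eq_expMeasure (hα : 0 < α) (hβ : 0 < β) (hm : Measurable X)
    (hX : IsWeibull μ X α β) :
    μ.map (fun ω => (X ω / β) ^ α) = expMeasure 1 := by
  have hmE : Measurable (fun ω => (X ω / β) ^ α) := (hm.div_const β).pow_const α
  have := isProbabilityMeasure_expMeasure (r := 1) one_pos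
  have := Measure.isProbabilityMeasure_map (μ := μ) hmE.aemeasurable
  apply Measure.eq_of_cdf
  ext y
  rw [cdf_expMeasure_eq one_pos, cdf_eq_real, measureReal_def,
    Measure.map_apply hmE measurableSet_Iic]
  split_ifs with hy
  · have hset : μ ((fun ω => (X ω / β) ^ α) ⁻¹' Set.Iic y) = μ {ω | X ω ≤ β * y ^ α⁻¹} := by
      apply measure_congr
      filter_upwards [hX.ae_pos] with ω hω
      apply propext
      change (X ω / β) ^ α ≤ y ↔ X ω ≤ β * y ^ α⁻¹
      rw [← le_rpow_inv_iff_of_pos (by positivity) hy hα, div_le_iff₀' hβ]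
    rw [hset, hX, weibullCDF]
    rcases hy.eq_or_lt with rfl | hy
    · simp [zero_rpow (inv_pos.2 hα).ne']
    · have : 0 < β * y ^ α⁻¹ := by positivity
      rw [if_neg this.not_ge, mul_div_cancel_left₀ _ hβ.ne', rpow_inv_rpow hy.le hα.ne',
        ENNReal.toReal_ofReal, one_mul]
      simpa using hy.le
  · have : μ ((fun ω => (X ω / β) ^ α) ⁻¹' Set.Iic y) = 0 := by
      apply measure_mono_null _ (ae_iff.1 hX.ae_pos)
      intro ω hω hpos
      have h1 : (X ω / β) ^ α ≤ y := hω
      have h2 : 0 < (X ω / β) ^ α := by positivity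
      linarith
    simp [this]

/-- Moments of order `p > -1` of the standard exponential distribution are values of `Γ`. -/
lemma integral_rpow_expMeasure {p : ℝ} (hp : -1 < p) :
    Integrable (fun x : ℝ => x ^ p) (expMeasure 1) ∧
      ∫ x, x ^ p ∂(expMeasure 1) = Gamma (p + 1) := by
  have hmeas : Measurable (exponentialPDF 1) := (measurable_exponentialPDFReal 1).ennreal_ofReal
  have hd : expMeasure 1 = volume.withDensity (exponentialPDF 1) := rfl
  have hlt : ∀ᵐ x : ℝ, exponentialPDF 1 x < ⊤ := Filter.Eventually.of_forall fun x => by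
    simp [exponentialPDF]
  have hind : (fun x : ℝ => (exponentialPDF 1 x).toReal • x ^ p)
      =ᵐ[volume] (Set.Ioi 0).indicator (fun x : ℝ => exp (-x) * x ^ (p + 1 - 1)) := by
    filter_upwards [compl_mem_ae_iff.2 (measure_singleton (μ := (volume : Measure ℝ)) 0)]
      with x hx
    have hx0 : x ≠ 0 := hx
    rw [exponentialPDF_eq]
    rcases lt_or_gt_of_ne hx0 with h | h
    · simp [h.le, h.not_ge]
    · simp [h, h.le, ENNReal.toReal_ofReal (exp_pos _).le]
  constructor
  · rw [hd, integrable_withDensity_iff_integrable_smul' hmeas hlt, integrable_congr hind,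
      integrable_indicator_iff measurableSet_Ioi]
    exact GammaIntegral_convergent (by linarith)
  · rw [hd, integral_withDensity_eq_integral_toReal_smul hmeas hlt, integral_congr_ae hind,
      integral_indicator measurableSet_Ioi, Gamma_eq_integral (by linarith)]

/-- The moment generating function of `log X` is `t ↦ β ^ t * Γ(t / α + 1)` for `t > -α`. -/
lemma IsWeibull.mgf_log (hα : 0 < α) (hβ : 0 < β) (hm : Measurable X)
    (hX : IsWeibull μ X α β) {t : ℝ} (ht : -α < t) :
    Integrable (fun ω => exp (t * log (X ω))) μ ∧
      mgf (fun ω => log (X ω)) μ t = β ^ t * Gamma (t / α + 1) := by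
  have hmE : Measurable (fun ω => (X ω / β) ^ α) := (hm.div_const β).pow_const α
  obtain ⟨h1, h2⟩ := integral_rpow_expMeasure (p := t / α) (by
    rw [lt_div_iff₀ hα]; linarith)
  have hms : Measurable fun x : ℝ => x ^ (t / α) := measurable_id.pow_const _
  have hae : (fun ω => exp (t * log (X ω)))
      =ᵐ[μ] fun ω => β ^ t * ((X ω / β) ^ α) ^ (t / α) := by
    filter_upwards [hX.ae_pos] with ω hω
    rw [← rpow_mul (by positivity), mul_div_cancel₀ _ hα.ne', div_rpow hω.le hβ.le,
      mul_div_cancel₀ _ (by positivity), rpow_def_of_pos hω, mul_comm]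
  rw [← hX.map_eq_expMeasure hα hβ hm] at h1 h2
  rw [integral_map hmE.aemeasurable hms.aestronglyMeasurable] at h2
  rw [integrable_map_measure hms.aestronglyMeasurable hmE.aemeasurable] at h1
  refine ⟨(integrable_congr hae).2 (h1.const_mul _), ?_⟩
  rw [mgf, integral_congr_ae hae, integral_const_mul, h2]

/-- Near `0` the moment generating function `f` of `log X₁ - log X₂` satisfies
`f(t) · sin(πt / α) = πt / α`, by Euler's reflection formula. -/
lemma IsWeibull.mgf_log_sub_log (hα : 0 < α) (hβ : 0 < β) (hm₁ : Measurable X₁)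
    (hm₂ : Measurable X₂) (hX₁ : IsWeibull μ X₁ α β) (hX₂ : IsWeibull μ X₂ α β)
    (hindep : IndepFun X₁ X₂ μ) {t : ℝ} (ht : t ∈ Set.Ioo (-α) α) :
    Integrable (fun ω => exp (t * (log (X₁ ω) - log (X₂ ω)))) μ ∧
      mgf (fun ω => log (X₁ ω) - log (X₂ ω)) μ t * sin (π / α * t) = π / α * t := by
  obtain ⟨i1, m1⟩ := hX₁.mgf_log hα hβ hm₁ ht.1
  obtain ⟨i2, m2⟩ := hX₂.mgf_log hα hβ hm₂ (t := -t) (by linarith [ht.2])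
  have hi : IndepFun (fun ω => log (X₁ ω)) (-fun ω => log (X₂ ω)) μ :=
    hindep.comp measurable_log (φ := log) (ψ := fun x => -log x) measurable_log.neg
  have i2' : Integrable (fun ω => exp (t * (-fun ω => log (X₂ ω)) ω)) μ := by
    simpa using i2
  have heq : (fun ω => log (X₁ ω) - log (X₂ ω))
      = (fun ω => log (X₁ ω)) + (-fun ω => log (X₂ ω)) := by
    ext ω; simp [sub_eq_add_neg]
  refine ⟨?_, ?_⟩
  · simpa [sub_eq_add_neg] using hi.integrable_exp_mul_add i1 i2'
  · rw [heq, hi.mgf_add i1.aestronglyMeasurable i2'.aestronglyMeasurable, mgf_neg, m1, m2]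
    rcases eq_or_ne t 0 with rfl | h0
    · simp
    have hs0 : t / α ≠ 0 := div_ne_zero h0 hα.ne'
    have hs1 : -1 < t / α := by rw [lt_div_iff₀ hα]; linarith [ht.1]
    have hs2 : t / α < 1 := by rw [div_lt_iff₀ hα]; linarith [ht.2]
    have hsin : sin (π * (t / α)) ≠ 0 := by
      rw [Ne, sin_eq_zero_iff_of_lt_of_lt (by nlinarith [pi_pos]) (by nlinarith [pi_pos])]
      exact mul_ne_zero pi_ne_zero hs0
    have hb : β ^ t * β ^ (-t) = 1 := by rw [← rpow_add hβ]; simp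
    have hG := Gamma_mul_Gamma_one_sub (t / α)
    have harg : π / α * t = π * (t / α) := by ring
    rw [harg, Gamma_add_one hs0, neg_div, neg_add_eq_sub]
    calc _ = β ^ t * β ^ (-t) * (t / α) * (Gamma (t / α) * Gamma (1 - t / α))
          * sin (π * (t / α)) := by ring
      _ = π * (t / α) := by rw [hb, hG, one_mul, mul_assoc, div_mul_cancel₀ _ hsin, mul_comm]

end Weibull

theorem weibull_var_H1_bound {Ω : Type*} [MeasurableSpace Ω] (μ : Measure Ω)
    [IsProbabilityMeasure μ] (X₁ X₂ : Ω → ℝ) (α β : ℝ) (hα : 0 < α) (hβ : 0 < β)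
    (hm₁ : Measurable X₁) (hm₂ : Measurable X₂)
    (hX₁ : IsWeibull μ X₁ α β) (hX₂ : IsWeibull μ X₂ α β)
    (hindep : IndepFun X₁ X₂ μ) :
    variance (fun ω => (Real.log (X₁ ω) + Real.log (X₂ ω)) / (2 * Real.log 2)
        - Real.log (min (X₁ ω) (X₂ ω)) / Real.log 2) μ
      ≤ variance (fun ω => Real.log (X₁ ω)) μ / (2 * Real.log 2 ^ 2) ∧
    variance (fun ω => Real.log (X₁ ω)) μ / (2 * Real.log 2 ^ 2)
      = (π ^ 2 / 6) / (2 * α ^ 2 * Real.log 2 ^ 2) := by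
  have hmem : ∀ X : Ω → ℝ, Measurable X → IsWeibull μ X α β →
      0 ∈ interior (integrableExpSet (fun ω => log (X ω)) μ) := by
    intro X hm hX
    rw [mem_interior_iff_mem_nhds]
    filter_upwards [Ioi_mem_nhds (neg_lt_zero.2 hα)] with t ht
    exact (hX.mgf_log hα hβ hm ht).1
  have hball : Set.Ioo (-α) α ∈ 𝓝 (0 : ℝ) := Ioo_mem_nhds (by linarith) hα
  set Y : Ω → ℝ := fun ω => log (X₁ ω) - log (X₂ ω) with hY
  have hYmem : 0 ∈ interior (integrableExpSet Y μ) := by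
    rw [mem_interior_iff_mem_nhds]
    filter_upwards [hball] with t ht
    exact (IsWeibull.mgf_log_sub_log hα hβ hm₁ hm₂ hX₁ hX₂ hindep ht).1
  have hl1 : MemLp (fun ω => log (X₁ ω)) 2 μ :=
    memLp_of_mem_interior_integrableExpSet (hmem X₁ hm₁ hX₁) 2
  have hl2 : MemLp (fun ω => log (X₂ ω)) 2 μ :=
    memLp_of_mem_interior_integrableExpSet (hmem X₂ hm₂ hX₂) 2
  have hYsq : μ[Y ^ 2] = (π / α) ^ 2 / 3 := by
    rw [← iteratedDeriv_mgf_zero hYmem 2]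
    refine iteratedDeriv_two_of_mul_sin (by positivity) (analyticAt_mgf hYmem) ?_
    filter_upwards [hball] with t ht
    exact (IsWeibull.mgf_log_sub_log hα hβ hm₁ hm₂ hX₁ hX₂ hindep ht).2
  have hid : IdentDistrib (fun ω => log (X₁ ω)) (fun ω => log (X₂ ω)) μ μ := by
    have h : IdentDistrib X₁ X₂ μ μ := by
      refine ⟨hm₁.aemeasurable, hm₂.aemeasurable, ?_⟩
      have := Measure.isProbabilityMeasure_map (μ := μ) hm₁.aemeasurable
      refine Measure.ext_of_Iic _ _ fun x => ?_
      rw [Measure.map_apply hm₁ measurableSet_Iic, Measure.map_apply hm₂ measurableSet_Iic]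
      exact (hX₁ x).trans (hX₂ x).symm
    exact h.comp measurable_log
  have hYmean : μ[Y] = 0 := by
    rw [hY, integral_sub (hl1.integrable one_le_two) (hl2.integrable one_le_two),
      hid.integral_eq, sub_self]
  have hYvar : variance Y μ = 2 * variance (fun ω => log (X₁ ω)) μ := by
    have hi : IndepFun (fun ω => log (X₁ ω)) (fun ω => log (X₂ ω)) μ :=
      hindep.comp measurable_log measurable_log
    rw [hY, variance_fun_sub hl1 hl2, hi.covariance_eq_zero hl1 hl2, ← hid.variance_eq]
    ring
  have hYm : Measurable Y := (measurable_log.comp hm₁).sub (measurable_log.comp hm₂)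
  have hYvar' : variance Y μ = μ[Y ^ 2] := variance_of_integral_eq_zero hYm.aemeasurable hYmean
  have hL : 0 < log 2 := log_pos one_lt_two
  constructor
  · have hH : (fun ω => (log (X₁ ω) + log (X₂ ω)) / (2 * log 2)
        - log (min (X₁ ω) (X₂ ω)) / log 2) =ᵐ[μ] fun ω => (2 * log 2)⁻¹ * |Y ω| := by
      filter_upwards [hX₁.ae_pos, hX₂.ae_pos] with ω h1 h2
      rcases le_total (X₁ ω) (X₂ ω) with h | h
      · have := log_le_log h1 h
        rw [min_eq_left h, hY, abs_of_nonpos (by simpa using this)]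
        field_simp; ring
      · have := log_le_log h2 h
        rw [min_eq_right h, hY, abs_of_nonneg (by simpa using this)]
        field_simp; ring
    rw [variance_congr hH, variance_const_mul]
    have hle : variance (fun ω => |Y ω|) μ ≤ μ[Y ^ 2] := by
      refine (variance_le_expectation_sq hYm.abs.aestronglyMeasurable).trans_eq ?_
      simp
    rw [← hYvar', hYvar] at hle
    calc _ ≤ (2 * log 2)⁻¹ ^ 2 * (2 * variance (fun ω => log (X₁ ω)) μ) := by gcongr
      _ = _ := by field_simp
  · have : variance (fun ω => log (X₁ ω)) μ = π ^ 2 / (6 * α ^ 2) := by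
      have : 2 * variance (fun ω => log (X₁ ω)) μ = (π / α) ^ 2 / 3 := by
        rw [← hYvar, hYvar', hYsq]
      field_simp at this ⊢
      linarith
    rw [this]
    field_simp
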